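/- Let d ≥ 2 and k, l ∈ ℝ. For 0 < δ < 1 and a natural number N ≥ 3, define A′_N = [N, N+δ/N] × [0, δ/(d−1)]^{d−1} and C_N = [N+1−δ/(2N), N+1] × [0, δ/(2(d−1))]^{d−1} in ℝ^d, and for t > 0 define J⁺_N(ξ) = |ξ| · ∫₀ᵗ ∫_{ℝ^d} (⟨ξ⟩^l / (⟨ξ₁⟩^k ⟨ξ−ξ₁⟩^k)) · e^{−is(|ξ₁|² − |ξ−ξ₁|² + |ξ|)} · χ_{A′_N}(ξ₁) χ_{C_N}(ξ−ξ₁) dξ₁ ds. Then there exists a constant c > 0, depending only on d, k, l and δ, such that for all N ≥ 3 and all t > 0 with 7δt < 1, one has ‖J⁺_N‖_{L²(ℝ^d)} ≥ c · t · N^{l−2k−1/2}. -/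

import Mathlib

/-!
On `A′_N × C_N` the phase `|ξ₁|² − |ξ−ξ₁|² + |ξ|` stays bounded although each term is large. With
`x`, `y` the first coordinates of `ξ₁`, `ξ - ξ₁`, one has
`x² − y² + (x + y) = (x − y + 1)(x + y)`, where the first factor is at most `3δ/(2N)` and the second
at most `2N + 2`; the transverse coordinates only contribute `O(δ)`. Hence the phase is at most `7δ`
in absolute value (`phase_bound`), so for `7δt < 1` its exponential has real part at least `1/2`
and there is no cancellation in the integral (`osc_lower_bound`).

If `ξ` lies in the translate of `C_N` with corner `(2N+1, δ/(2(d−1)), …)`, then `ξ - C_N ⊆ A′_N`,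
so the integration runs over a set of measure `|C_N| = K/N`. As all the brackets are comparable to
`N`, this gives `|J⁺_N(ξ)| ≳ N · t · N^{l−2k} · N⁻¹` on that translate, whose measure is again
`K/N`; taking the `L²` norm contributes the remaining factor `N^{-1/2}`.
-/

open MeasureTheory

/-- The box `A′_N = [N, N+δ/N] × [0, δ/(d−1)]^{d−1}` in `ℝ^d`. -/
def boxA' (d N : ℕ) (δ : ℝ) : Set (EuclideanSpace ℝ (Fin d)) :=
  {ξ | ∀ j : Fin d,
    if (j : ℕ) = 0 then ξ j ∈ Set.Icc (N : ℝ) ((N : ℝ) + δ / N)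
    else ξ j ∈ Set.Icc 0 (δ / ((d : ℝ) - 1))}

/-- The box `C_N = −B′_N = [N+1−δ/(2N), N+1] × [0, δ/(2(d−1))]^{d−1}` in `ℝ^d`. -/
def boxC (d N : ℕ) (δ : ℝ) : Set (EuclideanSpace ℝ (Fin d)) :=
  {ξ | ∀ j : Fin d,
    if (j : ℕ) = 0 then ξ j ∈ Set.Icc ((N : ℝ) + 1 - δ / (2 * N)) ((N : ℝ) + 1)
    else ξ j ∈ Set.Icc 0 (δ / (2 * ((d : ℝ) - 1)))}

/-- The Japanese bracket `⟨ξ⟩ = √(1+|ξ|²)`. -/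
noncomputable def jb {d : ℕ} (ξ : EuclideanSpace ℝ (Fin d)) : ℝ :=
  Real.sqrt (1 + ‖ξ‖ ^ 2)

/-- `J⁺_N(ξ)`, the non-resonant part of the second derivative of the wave
component, localized on `A′_N × C_N`. -/
noncomputable def Jplus (d N : ℕ) (k l δ t : ℝ) (ξ : EuclideanSpace ℝ (Fin d)) : ℂ :=
  (‖ξ‖ : ℂ) * ∫ s in (0 : ℝ)..t, ∫ ξ₁,
    ((jb ξ ^ l / (jb ξ₁ ^ k * jb (ξ - ξ₁) ^ k) : ℝ) : ℂ) *
      Complex.exp (-Complex.I * (s : ℂ) *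
        ((‖ξ₁‖ ^ 2 - ‖ξ - ξ₁‖ ^ 2 + ‖ξ‖ : ℝ) : ℂ)) *
      (((boxA' d N δ).indicator (fun _ => (1 : ℝ)) ξ₁ : ℝ) : ℂ) *
      (((boxC d N δ).indicator (fun _ => (1 : ℝ)) (ξ - ξ₁) : ℝ) : ℂ)

/-! ### Boxes and their volume -/

/-- The box `[a, a+w] × [p, p+r]^n` in `ℝ^{n+1}`. -/
def slab (n : ℕ) (a w p r : ℝ) : Set (EuclideanSpace ℝ (Fin (n + 1))) :=
  {ξ | ξ 0 ∈ Set.Icc a (a + w) ∧ ∀ j : Fin n, ξ j.succ ∈ Set.Icc p (p + r)}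

lemma slab_eq (n : ℕ) (a w p r : ℝ) :
    slab n a w p r = (WithLp.ofLp : EuclideanSpace ℝ (Fin (n + 1)) → _) ⁻¹'
      Set.Icc (Fin.cons a fun _ => p) (Fin.cons (a + w) fun _ => p + r) := by
  ext ξ
  simp only [slab, Set.mem_ofPred_eq, Set.mem_preimage, Set.mem_Icc, Pi.le_def, Fin.forall_fin_succ,
    Fin.cons_zero, Fin.cons_succ, forall_and]
  tauto

lemma isCompact_slab (n : ℕ) (a w p r : ℝ) : IsCompact (slab n a w p r) := by
  rw [slab_eq]
  exact (EuclideanSpace.equiv (Fin (n + 1)) ℝ).toHomeomorph.isCompact_preimage.2 isCompact_Icc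

lemma volume_slab (n : ℕ) (a w p r : ℝ) (hw : 0 ≤ w) (hr : 0 ≤ r) :
    volume (slab n a w p r) = ENNReal.ofReal (w * r ^ n) := by
  rw [slab_eq, (PiLp.volume_preserving_ofLp (Fin (n + 1))).measure_preimage
    measurableSet_Icc.nullMeasurableSet, Real.volume_Icc_pi]
  simp [Fin.prod_univ_succ, ENNReal.ofReal_mul hw, ENNReal.ofReal_pow hr]

/-! ### Oscillatory integrals with bounded phase -/

/-- Without cancellation in the exponential, an oscillatory integral over `[0,t] × S` is bounded
below by the trivial size `t · w₀ · |S|`, up to a factor `1/2`. -/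
lemma osc_lower_bound {n : ℕ} {S : Set (EuclideanSpace ℝ (Fin n))} (hS : IsCompact S)
    {w φ : EuclideanSpace ℝ (Fin n) → ℝ} (hw : Continuous w) (hφ : Continuous φ) {w₀ t : ℝ}
    (hw₀ : 0 ≤ w₀) (ht : 0 < t) (hwS : ∀ x ∈ S, w₀ ≤ w x) (hφS : ∀ x ∈ S, t * |φ x| ≤ 1) :
    t * (w₀ / 2 * volume.real S) ≤
      ‖∫ s in (0 : ℝ)..t, ∫ x in S, (w x : ℂ) * Complex.exp (-Complex.I * (s : ℂ) * (φ x : ℂ))‖ := by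
  set F : ℝ → ℂ := fun s => ∫ x in S, (w x : ℂ) * Complex.exp (-Complex.I * (s : ℂ) * (φ x : ℂ))
    with hF
  have hFc : Continuous F := by
    apply continuous_parametric_integral_of_continuous _ hS
    fun_prop
  have hre : ∀ s ∈ Set.Icc 0 t, w₀ / 2 * volume.real S ≤ (F s).re := by
    intro s hs
    have hint : IntegrableOn
        (fun x => (w x : ℂ) * Complex.exp (-Complex.I * (s : ℂ) * (φ x : ℂ))) S volume := by
      apply ContinuousOn.integrableOn_compact hS
      fun_prop
    have h1 := integral_re hint
    simp only [RCLike.re_to_complex] at h1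
    rw [hF, ← h1]
    apply setIntegral_ge_of_const_le_real hS.measurableSet hS.measure_lt_top.ne
    · intro x hx
      have e : -Complex.I * (s : ℂ) * (φ x : ℂ) = ((-(s * φ x) : ℝ) : ℂ) * Complex.I := by
        push_cast; ring
      rw [e, Complex.re_ofReal_mul, Complex.exp_ofReal_mul_I_re, Real.cos_neg]
      have hb : |s * φ x| ≤ 1 := by
        rw [abs_mul, abs_of_nonneg hs.1]
        exact (mul_le_mul_of_nonneg_right hs.2 (abs_nonneg _)).trans (hφS x hx)
      have hc : 1 / 2 ≤ Real.cos (s * φ x) := by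
        have h2 := @Real.one_sub_sq_div_two_le_cos (s * φ x)
        have h3 : (s * φ x) ^ 2 ≤ 1 := (sq_le_one_iff_abs_le_one _).2 hb
        linarith
      have := hwS x hx
      nlinarith
    · exact hint.re
  have hmono : ∫ _s in (0 : ℝ)..t, w₀ / 2 * volume.real S ≤ ∫ s in (0 : ℝ)..t, (F s).re :=
    intervalIntegral.integral_mono_on ht.le (by simp)
      ((Complex.continuous_re.comp hFc).intervalIntegrable _ _) hre
  have hcomm := Complex.reCLM.intervalIntegral_comp_comm (hFc.intervalIntegrable (μ := volume) 0 t)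
  simp only [Complex.reCLM_apply] at hcomm
  rw [hcomm, intervalIntegral.integral_const, sub_zero, smul_eq_mul] at hmono
  exact hmono.trans ((le_abs_self _).trans (Complex.abs_re_le_norm _))

/-! ### Sizes of norms, brackets and the phase on the boxes -/

/-- Powers of a quantity comparable to `N` are bounded below by the same power of `N`; this serves
for exponents of either sign. -/
lemma exists_rpow_lower (p : ℝ) :
    ∃ c > 0, ∀ N x : ℝ, 0 < N → N ≤ x → x ≤ 6 * N → c * N ^ p ≤ x ^ p := by
  refine ⟨min 1 (6 ^ p), by positivity, fun N x hN h1 h2 => ?_⟩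
  rcases le_total 0 p with hp | hp
  · calc min 1 (6 ^ p) * N ^ p ≤ 1 * N ^ p := by gcongr; exact min_le_left _ _
      _ ≤ x ^ p := by rw [one_mul]; exact Real.rpow_le_rpow hN.le h1 hp
  · calc min 1 (6 ^ p) * N ^ p ≤ 6 ^ p * N ^ p := by gcongr; exact min_le_right _ _
      _ = (6 * N) ^ p := (Real.mul_rpow (by norm_num) hN.le).symm
      _ ≤ x ^ p := Real.rpow_le_rpow_of_nonpos (hN.trans_le h1) h2 hp

/-- The transverse coordinates contribute at most `n(δ/n)² ≤ δ` to the squared norm. -/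
lemma norm_sq_sub_bound {n : ℕ} (hn : 1 ≤ n) {δ : ℝ} (hδ0 : 0 < δ) (hδ1 : δ < 1)
    (x : EuclideanSpace ℝ (Fin (n + 1)))
    (hx : ∀ j : Fin n, x j.succ ∈ Set.Icc 0 (δ / n)) :
    0 ≤ ‖x‖ ^ 2 - x 0 ^ 2 ∧ ‖x‖ ^ 2 - x 0 ^ 2 ≤ δ := by
  have hn' : (1 : ℝ) ≤ n := by exact_mod_cast hn
  rw [EuclideanSpace.real_norm_sq_eq, Fin.sum_univ_succ, add_sub_cancel_left]
  refine ⟨Finset.sum_nonneg fun i _ => sq_nonneg _, ?_⟩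
  calc ∑ i : Fin n, x i.succ ^ 2 ≤ ∑ _i : Fin n, δ / n := by
        apply Finset.sum_le_sum
        intro i _
        obtain ⟨h1, h2⟩ := hx i
        have h3 : δ / n ≤ 1 := (div_le_one (by linarith)).2 (by linarith)
        nlinarith
    _ = δ := by simp; field_simp

lemma norm_bounds {v x₀ δ : ℝ} (hv : 0 ≤ v) (hx₀ : 1 ≤ x₀) (hδ0 : 0 < δ) (h0 : 0 ≤ v ^ 2 - x₀ ^ 2)
    (h1 : v ^ 2 - x₀ ^ 2 ≤ δ) : x₀ ≤ v ∧ v ≤ x₀ + δ / 2 := by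
  constructor
  · exact (abs_le_of_sq_le_sq' (sub_nonneg.1 h0) hv).2
  · nlinarith

lemma jb_bounds {d : ℕ} (x : EuclideanSpace ℝ (Fin d)) {N : ℝ} (hN : 1 ≤ N) (h1 : N ≤ ‖x‖)
    (h2 : ‖x‖ ≤ 5 * N) : N ≤ jb x ∧ jb x ≤ 6 * N := by
  unfold jb
  constructor
  · apply Real.le_sqrt_of_sq_le
    nlinarith
  · rw [Real.sqrt_le_left (by linarith)]
    nlinarith [norm_nonneg x]

/-- The near-cancellation `|ξ₁|² - |ξ - ξ₁|² ≈ -|ξ|` on the product of the boxes. Here `x`, `y` are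
the first coordinates and `u`, `v`, `q` the norms of `ξ₁`, `ξ - ξ₁`, `ξ`. -/
lemma phase_bound {N δ x y u v q : ℝ} (hN : 3 ≤ N) (hδ0 : 0 < δ) (hδ1 : δ < 1)
    (hx : N ≤ x) (hy1 : N + 1 - δ / (2 * N) ≤ y) (hy2 : y ≤ N + 1)
    (hxy1 : 2 * N + 1 ≤ x + y) (hxy2 : x + y ≤ 2 * N + 1 + δ / (2 * N))
    (hu0 : 0 ≤ u ^ 2 - x ^ 2) (hu1 : u ^ 2 - x ^ 2 ≤ δ)
    (hv0 : 0 ≤ v ^ 2 - y ^ 2) (hv1 : v ^ 2 - y ^ 2 ≤ δ)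
    (hq0 : x + y ≤ q) (hq1 : q ≤ x + y + δ / 2) :
    |u ^ 2 - v ^ 2 + q| ≤ 7 * δ := by
  set e := δ / (2 * N) with he
  have heN : e * N = δ / 2 := by rw [he]; field_simp
  have he0 : 0 < e := by positivity
  have heδ : e ≤ δ := by nlinarith
  have key : u ^ 2 - v ^ 2 + q =
      (x - y + 1) * (x + y) + (u ^ 2 - x ^ 2) - (v ^ 2 - y ^ 2) + (q - (x + y)) := by ring
  have hf0 : 0 ≤ x - y + 1 := by linarith
  have hf1 : x - y + 1 ≤ 3 * e := by linarith
  have hp : (x - y + 1) * (x + y) ≤ 3 * e * (2 * N + 2) := by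
    apply mul_le_mul hf1 _ (by linarith) (by positivity)
    linarith
  have hp0 : 0 ≤ (x - y + 1) * (x + y) := mul_nonneg hf0 (by linarith)
  have hp2 : 3 * e * (2 * N + 2) ≤ 5 * δ := by nlinarith
  rw [key, abs_le]
  constructor <;> linarith

/-! ### Lower bounds for `J⁺_N` -/

lemma mem_boxA' {n N : ℕ} {δ : ℝ} (ξ : EuclideanSpace ℝ (Fin (n + 1))) :
    ξ ∈ boxA' (n + 1) N δ ↔ ξ ∈ slab n N (δ / N) 0 (δ / n) := by
  simp [boxA', slab, Fin.forall_fin_succ]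

lemma mem_boxC {n N : ℕ} {δ : ℝ} (ξ : EuclideanSpace ℝ (Fin (n + 1))) :
    ξ ∈ boxC (n + 1) N δ ↔
      ξ ∈ slab n (N + 1 - δ / (2 * N)) (δ / (2 * N)) 0 (δ / (2 * n)) := by
  simp [boxC, slab, Fin.forall_fin_succ]

/-- The pointwise lower bound for `J⁺_N` on a translate of `C_N` contained in `A′_N + C_N`. -/
lemma Jplus_pointwise {n N : ℕ} (hn : 1 ≤ n) (hN : 3 ≤ N) {k l δ t c₁ c₂ : ℝ} (hδ0 : 0 < δ)
    (hδ1 : δ < 1) (ht : 0 < t) (htδ : 7 * δ * t < 1) (hc₁ : 0 < c₁) (hc₂ : 0 < c₂)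
    (h₁ : ∀ N x : ℝ, 0 < N → N ≤ x → x ≤ 6 * N → c₁ * N ^ l ≤ x ^ l)
    (h₂ : ∀ N x : ℝ, 0 < N → N ≤ x → x ≤ 6 * N → c₂ * N ^ (-k) ≤ x ^ (-k))
    (ξ : EuclideanSpace ℝ (Fin (n + 1)))
    (hξ : ξ ∈ slab n (2 * N + 1) (δ / (2 * N)) (δ / (2 * n)) (δ / (2 * n))) :
    N * (t * (c₁ * N ^ l * (c₂ * N ^ (-k) * (c₂ * N ^ (-k))) / 2 *
      (δ / (2 * N) * (δ / (2 * n)) ^ n))) ≤ ‖Jplus (n + 1) N k l δ t ξ‖ := by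
  have hN' : (3 : ℝ) ≤ N := by exact_mod_cast hN
  have hn' : (1 : ℝ) ≤ n := by exact_mod_cast hn
  set C := slab n (N + 1 - δ / (2 * N)) (δ / (2 * N)) 0 (δ / (2 * n))
  set S : Set (EuclideanSpace ℝ (Fin (n + 1))) := (fun x => ξ - x) ⁻¹' C with hSdef
  have hSc : IsCompact S :=
    (Homeomorph.subLeft ξ).isCompact_preimage.2 (isCompact_slab _ _ _ _ _)
  have hSvol : volume.real S = δ / (2 * N) * (δ / (2 * n)) ^ n := by
    have hmp : MeasurePreserving (fun x => ξ - x) (volume : Measure (EuclideanSpace ℝ (Fin (n + 1))))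
      volume := Measure.measurePreserving_sub_left volume ξ
    rw [measureReal_def, hSdef, hmp.measure_preimage
      (isCompact_slab _ _ _ _ _).measurableSet.nullMeasurableSet,
      volume_slab _ _ _ _ _ (by positivity) (by positivity), ENNReal.toReal_ofReal (by positivity)]
  have hdd : δ / (n : ℝ) = δ / (2 * n) + δ / (2 * n) := by field_simp; norm_num
  have hNN : δ / (N : ℝ) = δ / (2 * N) + δ / (2 * N) := by field_simp; norm_num
  have he1 : δ / (2 * N) ≤ 1 := (div_le_one (by positivity)).2 (by linarith)
  have hen : 0 < δ / (2 * (n : ℝ)) := by positivity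
  obtain ⟨⟨hz1, hz2⟩, hzt⟩ := hξ
  have hSA : ∀ x ∈ S, x ∈ slab n N (δ / N) 0 (δ / n) := by
    rintro x ⟨⟨hx1, hx2⟩, hxt⟩
    simp only [PiLp.sub_apply] at hx1 hx2 hxt
    refine ⟨⟨by linarith, by linarith⟩, fun j => ?_⟩
    obtain ⟨h3, h4⟩ := hxt j
    obtain ⟨h5, h6⟩ := hzt j
    exact ⟨by linarith, by linarith⟩
  have hq := norm_sq_sub_bound hn hδ0 hδ1 ξ fun j => ⟨by linarith [(hzt j).1], by linarith [(hzt j).2]⟩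
  have hqn := norm_bounds (norm_nonneg ξ) (by linarith) hδ0 hq.1 hq.2
  -- All bounds needed on the domain of integration, in terms of first coordinates.
  have hpt : ∀ x ∈ S, (‖x‖ ^ 2 - x 0 ^ 2 ∈ Set.Icc 0 δ ∧ N ≤ x 0 ∧ x 0 ≤ N + 1) ∧
      (‖ξ - x‖ ^ 2 - (ξ 0 - x 0) ^ 2 ∈ Set.Icc 0 δ ∧ N + 1 - δ / (2 * N) ≤ ξ 0 - x 0 ∧
        ξ 0 - x 0 ≤ N + 1) := by
    intro x hx
    obtain ⟨⟨ha1, ha2⟩, hat⟩ := hSA x hx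
    obtain ⟨⟨hx1, hx2⟩, hxt⟩ := hx
    refine ⟨⟨norm_sq_sub_bound hn hδ0 hδ1 x fun j => ?_, ha1, ?_⟩,
      norm_sq_sub_bound hn hδ0 hδ1 (ξ - x) fun j => ?_, ?_, ?_⟩
    · simpa using hat j
    · have : δ / (N : ℝ) ≤ 1 := (div_le_one (by positivity)).2 (by linarith)
      linarith
    · exact ⟨(hxt j).1, by linarith [(hxt j).2]⟩
    · simpa using hx1
    · simpa using hx2
  have hjpos : ∀ x : EuclideanSpace ℝ (Fin (n + 1)), 0 < jb x := fun x => by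
    unfold jb; positivity
  have hjc : Continuous (jb : EuclideanSpace ℝ (Fin (n + 1)) → ℝ) := by
    unfold jb; fun_prop
  have hw : Continuous fun x : EuclideanSpace ℝ (Fin (n + 1)) =>
      jb ξ ^ l / (jb x ^ k * jb (ξ - x) ^ k) := by
    refine Continuous.div continuous_const (Continuous.mul ?_ ?_) fun x => ?_
    · exact hjc.rpow_const fun x => Or.inl (hjpos x).ne'
    · exact (hjc.comp (continuous_const.sub continuous_id)).rpow_const
        fun x => Or.inl (hjpos _).ne'
    · have := hjpos x
      have := hjpos (ξ - x)
      positivity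
  have hosc := osc_lower_bound hSc hw
    (φ := fun x => ‖x‖ ^ 2 - ‖ξ - x‖ ^ 2 + ‖ξ‖) (by fun_prop)
    (w₀ := c₁ * N ^ l * (c₂ * N ^ (-k) * (c₂ * N ^ (-k)))) (by positivity) ht
    (by
      intro x hx
      obtain ⟨⟨⟨a1, a2⟩, a3, a4⟩, ⟨b1, b2⟩, b3, b4⟩ := hpt x hx
      have ha := norm_bounds (norm_nonneg x) (by linarith) hδ0 a1 a2
      have hb := norm_bounds (norm_nonneg (ξ - x)) (by linarith) hδ0 b1 b2
      have jx := jb_bounds x (N := N) (by linarith) (by linarith) (by linarith)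
      have jy := jb_bounds (ξ - x) (N := N) (by linarith) (by linarith) (by linarith)
      have jz := jb_bounds ξ (N := N) (by linarith) (by linarith) (by linarith)
      have e1 := h₁ N _ (by linarith) jz.1 jz.2
      have e2 := h₂ N _ (by linarith) jx.1 jx.2
      have e3 := h₂ N _ (by linarith) jy.1 jy.2
      rw [div_eq_mul_inv, mul_inv, ← Real.rpow_neg (hjpos x).le, ← Real.rpow_neg (hjpos _).le]
      have := hjpos x
      have := hjpos (ξ - x)
      have := hjpos ξ
      gcongr)
    (by
      intro x hx
      obtain ⟨⟨⟨a1, a2⟩, a3, a4⟩, ⟨b1, b2⟩, b3, b4⟩ := hpt x hx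
      have := phase_bound (N := N) hN' hδ0 hδ1 a3 b3 b4 (by linarith) (by linarith) a1 a2 b1 b2
        (q := ‖ξ‖) (by linarith) (by linarith)
      nlinarith)
  rw [hSvol] at hosc
  -- The two indicators together select exactly the set `S = ξ - C_N`.
  have hJ : Jplus (n + 1) N k l δ t ξ = (‖ξ‖ : ℂ) * ∫ s in (0 : ℝ)..t, ∫ x in S,
      ((jb ξ ^ l / (jb x ^ k * jb (ξ - x) ^ k) : ℝ) : ℂ) *
      Complex.exp (-Complex.I * (s : ℂ) * ((‖x‖ ^ 2 - ‖ξ - x‖ ^ 2 + ‖ξ‖ : ℝ) : ℂ)) := by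
    unfold Jplus
    congr 2
    funext s
    rw [← integral_indicator hSc.measurableSet]
    congr 1
    funext x
    by_cases hx : x ∈ S
    · have hA : x ∈ boxA' (n + 1) N δ := (mem_boxA' x).2 (hSA x hx)
      have hC' : ξ - x ∈ boxC (n + 1) N δ := (mem_boxC _).2 hx
      rw [Set.indicator_of_mem hx, Set.indicator_of_mem hA, Set.indicator_of_mem hC']
      simp
    · have hC' : ξ - x ∉ boxC (n + 1) N δ := fun h => hx ((mem_boxC _).1 h)
      rw [Set.indicator_of_notMem hx, Set.indicator_of_notMem hC']
      simp
  rw [hJ, norm_mul, Complex.norm_real, norm_norm]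
  refine mul_le_mul (by linarith) hosc (by positivity) (norm_nonneg _)

/-- Lower bound `‖J⁺_N‖_{L²} ≳ t N^{l−2k−1/2}` for `7δt < 1`. -/
theorem Jplus_lower_bound
    (d : ℕ) (hd : 2 ≤ d) (k l δ : ℝ) (hδ0 : 0 < δ) (hδ1 : δ < 1) :
    ∃ c > 0, ∀ N : ℕ, 3 ≤ N → ∀ t : ℝ, 0 < t → 7 * δ * t < 1 →
      ENNReal.ofReal (c * t * (N : ℝ) ^ (l - 2 * k - 1 / 2)) ≤
        eLpNorm (Jplus d N k l δ t) 2 volume := by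
  obtain ⟨n, rfl⟩ : ∃ n, d = n + 1 := ⟨d - 1, by omega⟩
  have hn : 1 ≤ n := by omega
  have hn' : (1 : ℝ) ≤ n := by exact_mod_cast hn
  obtain ⟨c₁, hc₁, h₁⟩ := exists_rpow_lower l
  obtain ⟨c₂, hc₂, h₂⟩ := exists_rpow_lower (-k)
  set K : ℝ := δ / 2 * (δ / (2 * n)) ^ n with hK
  have hKpos : 0 < K := by positivity
  refine ⟨c₁ * (c₂ * c₂) / 2 * K * K ^ (1 / 2 : ℝ), by positivity, fun N hN t ht htδ => ?_⟩
  have hN' : (3 : ℝ) ≤ N := by exact_mod_cast hN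
  have hNpos : (0 : ℝ) < N := by linarith
  set R := slab n (2 * N + 1) (δ / (2 * N)) (δ / (2 * n)) (δ / (2 * n))
  have hV : δ / (2 * N) * (δ / (2 * n)) ^ n = K / N := by rw [hK]; field_simp
  set M : ℝ := N * (t * (c₁ * N ^ l * (c₂ * N ^ (-k) * (c₂ * N ^ (-k))) / 2 * (K / N))) with hM
  have hMpos : 0 ≤ M := by positivity
  have hle : eLpNorm (R.indicator fun _ => M) 2 volume ≤
      eLpNorm (Jplus (n + 1) N k l δ t) 2 volume := by
    apply eLpNorm_mono
    intro ξ
    by_cases hξ : ξ ∈ R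
    · rw [Set.indicator_of_mem hξ, Real.norm_of_nonneg hMpos, hM, ← hV]
      exact Jplus_pointwise hn hN hδ0 hδ1 ht htδ hc₁ hc₂ h₁ h₂ ξ hξ
    · simp [Set.indicator_of_notMem hξ]
  refine le_trans (le_of_eq ?_) hle
  rw [eLpNorm_indicator_const (isCompact_slab _ _ _ _ _).measurableSet (by simp) (by simp),
    volume_slab _ _ _ _ _ (by positivity) (by positivity), hV, Real.enorm_of_nonneg hMpos,
    ENNReal.ofReal_rpow_of_nonneg (by positivity) (by simp), ← ENNReal.ofReal_mul hMpos]
  congr 1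
  have e1 : (N : ℝ) ^ (l - 2 * k - 1 / 2) =
      N ^ l * (N ^ (-k) * N ^ (-k)) * ((N : ℝ) ^ (1 / 2 : ℝ))⁻¹ := by
    rw [← Real.rpow_neg hNpos.le, ← Real.rpow_add hNpos, ← Real.rpow_add hNpos,
      ← Real.rpow_add hNpos]
    congr 1
    ring
  rw [e1, hM, ENNReal.toReal_ofNat, Real.div_rpow hKpos.le hNpos.le]
  field_simp
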